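/- Let n, p ≥ 1 and let G be a finite subgroup of GL(n, ℂ). Let F₁, F₂ : ℂ[u₁,…,uₙ] → ℂ[[X₁,…,X_p]] be ℂ-algebra homomorphisms such that F₁(σ) = F₂(σ) for every G-invariant polynomial σ. Then there exists g ∈ G such that F₂(P) = F₁(g • P) for every polynomial P ∈ ℂ[u₁,…,uₙ]. -/

import Mathlib

/-!
Let a finite group `G` act on a commutative ring `A`, and let `F₁, F₂ : A → R` be ring
homomorphisms to a domain that agree on invariants. For `a : A`, the coefficients of
`∏ g, (T - g • a)` are invariant, so `F₁` and `F₂` send this polynomial to the same polynomial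
over `R`. As `F₂ a` is one of its roots, `F₂ a = F₁ (g • a)` for some `g`, a priori depending
on `a`.

Applied to `A[T] → R[T]`, this gives a common `g` for all coefficients of a polynomial, hence for
any finite family in `A`. If no `g` worked for the whole of `A`, each `g` would fail at some `a g`,
contradicting the statement for the finite family `a`.
-/

open MvPolynomial

/-- The action of `g ∈ GL(n, ℂ)` on polynomials by linear substitution:
`(g • P)(v) = P(g⁻¹ · v)`. -/
noncomputable def glAct {n : ℕ} (g : GL (Fin n) ℂ) :
    MvPolynomial (Fin n) ℂ →ₐ[ℂ] MvPolynomial (Fin n) ℂ :=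
  aeval fun i => ∑ j, C ((↑(g⁻¹) : Matrix (Fin n) (Fin n) ℂ) i j) * X j

section FiniteGroupAction

variable {G A R : Type*} [Group G] [Finite G] [CommRing A] [MulSemiringAction G A]
  [CommRing R] [IsDomain R]

lemma exists_eq_map_smul (F₁ F₂ : A →+* R)
    (hF : ∀ a, (∀ g : G, g • a = a) → F₁ a = F₂ a) (a : A) :
    ∃ g : G, F₂ a = F₁ (g • a) := by
  cases nonempty_fintype G
  let χ : Polynomial A := MulSemiringAction.charpoly G a
  have map_χ_eq : χ.map F₁ = χ.map F₂ := by
    ext k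
    simpa only [Polynomial.coeff_map] using
      hF _ (MulSemiringAction.smul_coeff_charpoly a k)
  have isRoot : (χ.map F₁).eval (F₂ a) = 0 := by
    rw [map_χ_eq, Polynomial.eval_map_apply, MulSemiringAction.eval_charpoly, map_zero]
  have prod_eq_zero : ∏ g : G, (F₂ a - F₁ (g • a)) = 0 := by
    simpa [χ, MulSemiringAction.charpoly_eq, Polynomial.map_prod, Polynomial.eval_prod]
      using isRoot
  obtain ⟨g, -, hg⟩ := Finset.prod_eq_zero_iff.mp prod_eq_zero
  exact ⟨g, sub_eq_zero.mp hg⟩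

lemma exists_forall_coeff_eq_map_smul (F₁ F₂ : A →+* R)
    (hF : ∀ a, (∀ g : G, g • a = a) → F₁ a = F₂ a) (f : Polynomial A) :
    ∃ g : G, ∀ k, F₂ (f.coeff k) = F₁ (g • f.coeff k) := by
  have map_eq_of_invariant (q : Polynomial A) (hq : ∀ g : G, g • q = q) :
      Polynomial.mapRingHom F₁ q = Polynomial.mapRingHom F₂ q := by
    ext k
    simpa only [Polynomial.coe_mapRingHom, Polynomial.coeff_map] using
      hF _ fun g => by rw [← Polynomial.coeff_smul, hq]
  obtain ⟨g, hg⟩ := exists_eq_map_smul _ _ map_eq_of_invariant f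
  exact ⟨g, fun k => by simpa using congrArg (Polynomial.coeff · k) hg⟩

lemma exists_forall_eq_map_smul_of_finite {ι : Type*} [Finite ι] (F₁ F₂ : A →+* R)
    (hF : ∀ a, (∀ g : G, g • a = a) → F₁ a = F₂ a) (a : ι → A) :
    ∃ g : G, ∀ i, F₂ (a i) = F₁ (g • a i) := by
  cases nonempty_fintype ι
  obtain ⟨e, he⟩ := Countable.exists_injective_nat ι
  let f : Polynomial A := ∑ i, Polynomial.monomial (e i) (a i)
  have coeff_f (i : ι) : f.coeff (e i) = a i := by
    classical simp [f, Polynomial.coeff_monomial, he.eq_iff]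
  obtain ⟨g, hg⟩ := exists_forall_coeff_eq_map_smul F₁ F₂ hF f
  exact ⟨g, fun i => by simpa only [coeff_f] using hg (e i)⟩

theorem stmt1_general (F₁ F₂ : A →+* R)
    (hF : ∀ a, (∀ g : G, g • a = a) → F₁ a = F₂ a) :
    ∃ g : G, ∀ a, F₂ a = F₁ (g • a) := by
  by_contra! h
  choose a ha using h
  obtain ⟨g, hg⟩ := exists_forall_eq_map_smul_of_finite F₁ F₂ hF a
  exact ha g (hg g)

end FiniteGroupAction

section LinearSubstitution

variable {n : ℕ}

lemma glAct_one : glAct (1 : GL (Fin n) ℂ) = AlgHom.id ℂ _ := by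
  ext1 i
  simp [glAct, Matrix.one_apply]

lemma glAct_mul (g h : GL (Fin n) ℂ) : glAct (g * h) = (glAct g).comp (glAct h) := by
  ext1 i
  simp only [glAct, AlgHom.comp_apply, aeval_X, map_sum, map_mul, mul_inv_rev, Units.val_mul,
    Matrix.mul_apply, algHom_C, algebraMap_eq, Finset.sum_mul, Finset.mul_sum]
  rw [Finset.sum_comm]
  simp only [mul_assoc]

/-- Linear substitution `glAct` as an action of `GL(n, ℂ)` by ring automorphisms of
`ℂ[u₁, …, uₙ]`, so that its finite subgroups fall under `stmt1_general`. -/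
noncomputable instance glMulSemiringAction :
    MulSemiringAction (GL (Fin n) ℂ) (MvPolynomial (Fin n) ℂ) where
  smul g P := glAct g P
  one_smul := DFunLike.congr_fun glAct_one
  mul_smul g h := DFunLike.congr_fun (glAct_mul g h)
  smul_zero g := map_zero (glAct g)
  smul_add g := map_add (glAct g)
  smul_one g := map_one (glAct g)
  smul_mul g := map_mul (glAct g)

end LinearSubstitution

theorem stmt1 (n p : ℕ) (hn : 1 ≤ n) (hp : 1 ≤ p)
    (G : Subgroup (GL (Fin n) ℂ)) (hGfin : (G : Set (GL (Fin n) ℂ)).Finite)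
    (F₁ F₂ : MvPolynomial (Fin n) ℂ →ₐ[ℂ] MvPowerSeries (Fin p) ℂ)
    (hF : ∀ σ : MvPolynomial (Fin n) ℂ,
      (∀ g ∈ G, glAct g σ = σ) → F₁ σ = F₂ σ) :
    ∃ g ∈ G, ∀ P : MvPolynomial (Fin n) ℂ, F₂ P = F₁ (glAct g P) := by
  have : IsDomain (MvPowerSeries (Fin p) ℂ) := NoZeroDivisors.to_isDomain _
  have : Finite G := hGfin
  obtain ⟨g, hg⟩ := stmt1_general (G := G) (F₁ : _ →+* MvPowerSeries (Fin p) ℂ) F₂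
    fun σ hσ => hF σ fun g hg => hσ ⟨g, hg⟩
  exact ⟨g, g.2, hg⟩
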